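/- Fix an integer n ≥ 3 and a real constant C₀ > 0. There exist δ₁ > 0 and c₁ > 0, depending only on n and C₀, with the following property: for every T > 0, every δ ∈ (0, δ₁], and every continuous function b : [0,T] → ℝ^{n+1} satisfying, for all t ∈ [0,T], ‖b(t)‖ ≤ C₀ · ∫_t^T exp(−(n−2)·(s−t)) · (‖b(s)‖² + δ² · exp(−2s)) ds, one has ‖b(t)‖ ≤ c₁ · δ² · exp(−t) for all t ∈ [0,T]. -/

import Mathlib

/-!
The proof is a backward continuity argument with `c₁ = C₀` and `δ₁ = 1 / C₀`. Put `M = C₀ δ²`, so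
that `M² ≤ δ²`. If `‖b s‖ ≤ M e^{-s}` for `s ∈ (τ, T)`, then, since `n - 2 ≥ 1`, the integral
inequality at `τ` gives
`‖b τ‖ ≤ C₀ (M² + δ²) ∫_τ^T e^{-(s-τ)} e^{-2s} ds ≤ C₀ (M² + δ²) e^{-2τ} / 3 ≤ (2/3) M e^{-τ}`.
Taking for `τ` the last time at which `‖b τ‖ ≥ M e^{-τ}` yields a contradiction, so there is no
such time. The integral estimate is `unstable_integral_le`.
-/

open intervalIntegral Real

/-- The rate-one Duhamel integral of a source `K e^{-2s}` gains a factor `1/3`. The rate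
`a ≥ 1` enters only through `e^{-a(s-τ)} ≤ e^{-(s-τ)}`, and the bound on `f` is needed only on the
open interval. -/
lemma unstable_integral_le {a τ T K : ℝ} (ha : 1 ≤ a) (hτ : 0 ≤ τ) (hτT : τ ≤ T) (hK : 0 ≤ K)
    {f : ℝ → ℝ} (hf : ContinuousOn f (Set.Icc τ T))
    (hfK : ∀ s ∈ Set.Ioo τ T, f s ≤ K * Real.exp (-2 * s)) :
    ∫ s in τ..T, Real.exp (-a * (s - τ)) * f s ≤ K / 3 * Real.exp (-τ) := by
  have hderiv : ∀ s : ℝ, HasDerivAt (fun s => -(K / 3) * Real.exp (τ - 3 * s))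
      (K * Real.exp (τ - 3 * s)) s := by
    intro s
    have h0 : HasDerivAt (fun s : ℝ => τ - 3 * s) (-(3 * 1)) s :=
      ((hasDerivAt_id' s).const_mul 3).const_sub τ
    exact (h0.exp.const_mul (-(K / 3))).congr_deriv (by ring)
  have hint : IntervalIntegrable (fun s => K * Real.exp (τ - 3 * s)) MeasureTheory.volume τ T :=
    Continuous.intervalIntegrable (by fun_prop) _ _
  have hcomp : ∫ s in τ..T, K * Real.exp (τ - 3 * s)
      = -(K / 3) * Real.exp (τ - 3 * T) - -(K / 3) * Real.exp (τ - 3 * τ) :=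
    integral_eq_sub_of_hasDerivAt (fun s _ => hderiv s) hint
  have hmono : ∫ s in τ..T, Real.exp (-a * (s - τ)) * f s
      ≤ ∫ s in τ..T, K * Real.exp (τ - 3 * s) := by
    refine integral_mono_on_of_le_Ioo hτT ?_ hint ?_
    · apply ContinuousOn.intervalIntegrable_of_Icc hτT
      exact (by fun_prop : Continuous fun s => Real.exp (-a * (s - τ))).continuousOn.mul hf
    · intro s hs
      calc Real.exp (-a * (s - τ)) * f s
          ≤ Real.exp (-a * (s - τ)) * (K * Real.exp (-2 * s)) := by
            gcongr
            exact hfK s hs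
        _ ≤ Real.exp (-(s - τ)) * (K * Real.exp (-2 * s)) := by
            gcongr
            nlinarith [hs.1]
        _ = K * Real.exp (τ - 3 * s) := by
            rw [mul_left_comm, ← Real.exp_add]
            ring_nf
  have hexp : Real.exp (τ - 3 * τ) ≤ Real.exp (-τ) := Real.exp_le_exp.2 (by linarith)
  have hK3 : 0 ≤ K / 3 := by positivity
  have h1 := mul_le_mul_of_nonneg_left hexp hK3
  have h2 := mul_nonneg hK3 (Real.exp_pos (τ - 3 * T)).le
  linarith

/-- Quantitative decay for the unstable-mode coefficients: if `b : [0,T] → ℝ^{n+1}` is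
continuous and satisfies the backward integral inequality
`‖b(t)‖ ≤ C₀ ∫_t^T e^{-(n-2)(s-t)} (‖b(s)‖² + δ² e^{-2s}) ds`,
then (for `δ` small depending only on `n, C₀`) one has `‖b(t)‖ ≤ c₁ δ² e^{-t}`. -/
theorem unstable_mode_decay (n : ℕ) (hn : 3 ≤ n) (C₀ : ℝ) (hC₀ : 0 < C₀) :
    ∃ δ₁ > (0 : ℝ), ∃ c₁ > (0 : ℝ),
      ∀ T > (0 : ℝ), ∀ δ : ℝ, 0 < δ → δ ≤ δ₁ →
        ∀ b : ℝ → EuclideanSpace ℝ (Fin (n + 1)),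
          ContinuousOn b (Set.Icc 0 T) →
          (∀ t ∈ Set.Icc (0 : ℝ) T,
            ‖b t‖ ≤ C₀ * ∫ s in t..T,
              Real.exp (-((n : ℝ) - 2) * (s - t)) * (‖b s‖ ^ 2 + δ ^ 2 * Real.exp (-2 * s))) →
          ∀ t ∈ Set.Icc (0 : ℝ) T, ‖b t‖ ≤ c₁ * δ ^ 2 * Real.exp (-t) := by
  refine ⟨1 / C₀, by positivity, C₀, hC₀, ?_⟩
  intro T hT δ hδ hδ₁ b hb hineq t ht
  set M : ℝ := C₀ * δ ^ 2 with hM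
  have hMpos : 0 < M := by positivity
  have hMsq : M ^ 2 ≤ δ ^ 2 := by
    have h1 : δ * C₀ ≤ 1 := (le_div_iff₀ hC₀).1 hδ₁
    have h2 : M ≤ δ := by nlinarith
    gcongr
  by_contra! hcon
  -- the set of times where the strict bound fails is compact, so it has a last element
  let S : Set ℝ := {s ∈ Set.Icc (0 : ℝ) T | M * Real.exp (-s) ≤ ‖b s‖}
  have hSclosed : IsClosed S :=
    isClosed_Icc.isClosed_le (by fun_prop) hb.norm
  have hScompact : IsCompact S :=
    isCompact_Icc.of_isClosed_subset hSclosed fun s hs => hs.1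
  obtain ⟨τ, ⟨hτ, hτM⟩, hτmax⟩ := hScompact.exists_isGreatest ⟨t, ht, hcon.le⟩
  have hn' : (1 : ℝ) ≤ (n : ℝ) - 2 := by
    have : (3 : ℝ) ≤ n := by exact_mod_cast hn
    linarith
  have hbτ : ContinuousOn b (Set.Icc τ T) := hb.mono (Set.Icc_subset_Icc_left hτ.1)
  have hbound := unstable_integral_le (K := M ^ 2 + δ ^ 2)
    (f := fun s => ‖b s‖ ^ 2 + δ ^ 2 * Real.exp (-2 * s)) hn' hτ.1 hτ.2 (by positivity)
    (by fun_prop) (by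
      intro s hs
      have hlt : ‖b s‖ ≤ M * Real.exp (-s) := by
        by_contra! h
        exact absurd (hτmax ⟨⟨hτ.1.trans hs.1.le, hs.2.le⟩, h.le⟩) (not_le.2 hs.1)
      have hsq : ‖b s‖ ^ 2 ≤ M ^ 2 * Real.exp (-2 * s) := by
        calc ‖b s‖ ^ 2 ≤ (M * Real.exp (-s)) ^ 2 := by gcongr
          _ = M ^ 2 * Real.exp (-2 * s) := by
            rw [mul_pow, ← Real.exp_nat_mul]
            push_cast
            ring_nf
      show ‖b s‖ ^ 2 + δ ^ 2 * Real.exp (-2 * s) ≤ (M ^ 2 + δ ^ 2) * Real.exp (-2 * s)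
      linarith)
  have hE := Real.exp_pos (-τ)
  have h23 : C₀ * ((M ^ 2 + δ ^ 2) / 3 * Real.exp (-τ)) ≤ 2 / 3 * M * Real.exp (-τ) := by
    have h : C₀ * ((M ^ 2 + δ ^ 2) / 3) ≤ 2 / 3 * M := by nlinarith
    calc _ = C₀ * ((M ^ 2 + δ ^ 2) / 3) * Real.exp (-τ) := by ring
      _ ≤ _ := by gcongr
  have hfinal := (hineq τ hτ).trans ((mul_le_mul_of_nonneg_left hbound hC₀.le).trans h23)
  have := mul_pos hMpos hE
  linarith
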